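/- arXiv:2201.06636 — 6 statements merged into one kernel-verified Lean document; each statement's English description precedes it below -/
import Mathlib

section
/- Define N(m) = m XOR (2m) for m ∈ ℕ, where XOR is the bitwise exclusive or on ℕ. Then for every m ∈ ℕ: N(4m) = 4·N(m); N(4m+1) = 4·N(m) + 3; N(4m+2) = 2·N(2m+1); and N(4m+3) + 1 = 2·N(2m+1). -/
/-- `N(m) = m XOR 2m`. -/
def nimDouble (m : ℕ) : ℕ := m ^^^ (2 * m)

theorem xor_bits (a b x y : ℕ) (hx : x < 2) (hy : y < 2) :
    (2 * a + x) ^^^ (2 * b + y) = 2 * (a ^^^ b) + (x + y) % 2 := by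
  have h1 : ((2 * a + x) ^^^ (2 * b + y)) / 2 = a ^^^ b := by
    have := Nat.xor_div_two_pow (a := 2 * a + x) (b := 2 * b + y) (n := 1)
    rw [pow_one] at this
    rw [this]
    congr 1 <;> omega
  have h2 : ((2 * a + x) ^^^ (2 * b + y)) % 2 = (x + y) % 2 := by
    rw [Nat.xor_mod_two_eq]
    omega
  omega

theorem stmt_9 (m : ℕ) :
    nimDouble (4 * m) = 4 * nimDouble m ∧
    nimDouble (4 * m + 1) = 4 * nimDouble m + 3 ∧
    nimDouble (4 * m + 2) = 2 * nimDouble (2 * m + 1) ∧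
    nimDouble (4 * m + 3) + 1 = 2 * nimDouble (2 * m + 1) := by
  unfold nimDouble
  have e00 := fun a b => xor_bits a b 0 0 (by omega) (by omega)
  have e01 := fun a b => xor_bits a b 0 1 (by omega) (by omega)
  have e10 := fun a b => xor_bits a b 1 0 (by omega) (by omega)
  have e11 := fun a b => xor_bits a b 1 1 (by omega) (by omega)
  simp only [add_zero, zero_add, Nat.reduceMod, Nat.reduceAdd] at e00 e01 e10 e11
  refine ⟨?_, ?_, ?_, ?_⟩
  · rw [show 4 * m = 2 * (2 * m) by ring, e00, e00]
    ring
  · rw [show 4 * m + 1 = 2 * (2 * m) + 1 by ring, e10, e01]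
    ring
  · rw [show 4 * m + 2 = 2 * (2 * m + 1) by ring, e00]
  · rw [show 4 * m + 3 = 2 * (2 * m + 1) + 1 by ring, e10, e11, e10,
      show 2 * m + 1 = 2 * m + 1 by rfl]
    ring
end

section
/- Let e ∈ ℕ be evil, i.e., the binary expansion of e contains an even number of 1s. Then there exists a unique m ∈ ℕ such that m XOR (2m) = e. -/
/-- A natural number is evil if its binary expansion has an even number of ones. -/
def Evil (n : ℕ) : Prop := Even ((Nat.digits 2 n).count 1)

theorem xor_shift_exists (e : ℕ) : ∀ c, c < 2 → (Nat.digits 2 e).count 1 % 2 = c →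
    ∃ m : ℕ, m ^^^ (2 * m + c) = e := by
  induction e using Nat.strong_induction_on with
  | _ e ih =>
    intro c hc h
    rcases Nat.eq_zero_or_pos e with rfl | hpos
    · simp at h
      subst h
      exact ⟨0, rfl⟩
    · rw [Nat.digits_def' (by norm_num) hpos, List.count_cons] at h
      obtain ⟨m, hm⟩ := ih (e / 2) (by omega) ((e + c) % 2) (by omega) (by
        rcases Nat.mod_two_eq_zero_or_one e with h0 | h0 <;> simp [h0] at h <;> omega)
      refine ⟨2 * m + (e + c) % 2, ?_⟩
      have h1 := Nat.xor_mod_two_eq (m := 2 * m + (e + c) % 2) (n := 2 * (2 * m + (e + c) % 2) + c)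
      have h2 := Nat.xor_div_two (a := 2 * m + (e + c) % 2) (b := 2 * (2 * m + (e + c) % 2) + c)
      rw [show (2 * m + (e + c) % 2) / 2 = m by omega,
        show (2 * (2 * m + (e + c) % 2) + c) / 2 = 2 * m + (e + c) % 2 by omega, hm] at h2
      omega

theorem xor_shift_unique (k : ℕ) : ∀ m n c, m + n ≤ k → c < 2 →
    m ^^^ (2 * m + c) = n ^^^ (2 * n + c) → m = n := by
  induction k with
  | zero => intros; omega
  | succ k ih =>
    intro m n c hk hc h
    by_cases h0 : m + n = 0
    · omega
    have h1 := Nat.xor_mod_two_eq (m := m) (n := 2 * m + c)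
    have h2 := Nat.xor_mod_two_eq (m := n) (n := 2 * n + c)
    rw [h] at h1
    have h3 : m % 2 = n % 2 := by omega
    have h4 := Nat.xor_div_two (a := m) (b := 2 * m + c)
    have h5 := Nat.xor_div_two (a := n) (b := 2 * n + c)
    rw [h, h5] at h4
    rw [show (2 * n + c) / 2 = 2 * (n / 2) + n % 2 by omega,
      show (2 * m + c) / 2 = 2 * (m / 2) + n % 2 by omega] at h4
    have := ih (m / 2) (n / 2) (n % 2) (by omega) (by omega) h4.symm
    omega

theorem stmt_12 (e : ℕ) (he : Evil e) :
    ∃! m : ℕ, m ^^^ (2 * m) = e := by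
  obtain ⟨m, hm⟩ := xor_shift_exists e 0 (by norm_num) (Nat.even_iff.mp he)
  refine ⟨m, hm, fun n hn => ?_⟩
  exact xor_shift_unique (n + m) n m 0 le_rfl (by norm_num) (Eq.trans hn hm.symm)
end

section
/- The set {m XOR (2m) : m ∈ ℕ} is exactly the set of evil numbers, i.e., a natural number n satisfies n = m XOR (2m) for some m ∈ ℕ if and only if the binary expansion of n contains an even number of 1s. -/
theorem xor_eq_iff_aux (a b n : ℕ) :
    a ^^^ b = n ↔ ((a / 2) ^^^ (b / 2) = n / 2 ∧ (a + b) % 2 = n % 2) := by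
  have h1 : (a ^^^ b) / 2 = (a / 2) ^^^ (b / 2) := Nat.xor_div_two
  have h2 : (a ^^^ b) % 2 = (a + b) % 2 := Nat.xor_mod_two_eq
  rw [← h1, ← h2]
  constructor
  · rintro rfl; exact ⟨rfl, rfl⟩
  · rintro ⟨h, h'⟩; omega

theorem evil_aux (n : ℕ) : ∀ b < 2,
    ((∃ m : ℕ, m ^^^ (2 * m + b) = n) ↔ ((Nat.digits 2 n).count 1) % 2 = b) := by
  induction n using Nat.strong_induction_on with
  | _ n ih =>
    intro b hb
    rcases Nat.eq_zero_or_pos n with rfl | hn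
    · simp only [Nat.xor_eq_zero_iff, Nat.digits_zero, List.count_nil]
      constructor
      · rintro ⟨m, hm⟩; omega
      · intro h; exact ⟨0, by omega⟩
    · have hstep : (∃ m : ℕ, m ^^^ (2 * m + b) = n) ↔
          ∃ k : ℕ, k ^^^ (2 * k + (n + b) % 2) = n / 2 := by
        constructor
        · rintro ⟨m, hm⟩
          rw [xor_eq_iff_aux] at hm
          refine ⟨m / 2, ?_⟩
          have h2 : (2 * m + b) / 2 = m := by omega
          have h3 : m % 2 = (n + b) % 2 := by
            have := hm.2
            omega
          rw [← hm.1, h2, ← h3, Nat.div_add_mod]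
        · rintro ⟨k, hk⟩
          refine ⟨2 * k + (n + b) % 2, ?_⟩
          rw [xor_eq_iff_aux]
          refine ⟨?_, by omega⟩
          rw [← hk]
          congr 1 <;> omega
      rw [hstep, ih (n / 2) (by omega) _ (by omega),
        Nat.digits_def' (by norm_num : 1 < 2) hn, List.count_cons]
      rcases Nat.mod_two_eq_zero_or_one n with h | h <;> simp [h] <;> omega

theorem stmt_13 (n : ℕ) :
    (∃ m : ℕ, m ^^^ (2 * m) = n) ↔ Evil n := by
  have h := evil_aux n 0 (by norm_num)
  simpa [Evil, Nat.even_iff] using h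
end

section
/- Define N(m) = m XOR (2m) and, for an odious number i ≥ 1, let O_i = {N^m(i) : m ≥ 1} be the forward orbit of i under N (where N^m denotes the m-fold iterate of N). Then: (1) for distinct odious numbers i ≠ j, the sets O_i and O_j are disjoint; and (2) the union of the sets O_i over all odious i equals {N(m) : m ≥ 1}, i.e., every number of the form N(m) with m ≥ 1 lies in O_i for some odious i. -/
/-- A natural number is odious if its binary expansion has an odd number of ones. -/
def Odious (n : ℕ) : Prop := Odd ((Nat.digits 2 n).count 1)

/-- The forward orbit `{N^m(i) : m ≥ 1}` of `i` under `N`. -/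
def orbit (i : ℕ) : Set ℕ := {x | ∃ m ≥ 1, nimDouble^[m] i = x}

theorem bit_inj' {a b : Bool} {m n : ℕ} : Nat.bit a m = Nat.bit b n ↔ a = b ∧ m = n := by
  cases a <;> cases b <;> simp [Nat.bit] <;> omega

def gx (c : Bool) (m : ℕ) : ℕ := m ^^^ Nat.bit c m

theorem gx_zero (m : ℕ) : nimDouble m = gx false m := by
  simp [nimDouble, gx, Nat.bit]

theorem gx_bit (c d : Bool) (m : ℕ) : gx c (Nat.bit d m) = Nat.bit (d ^^ c) (gx d m) := by
  unfold gx
  rw [Nat.xor_bit]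

theorem odious_zero : ¬ Odious 0 := by simp [Odious]

theorem odious_bit (b : Bool) (n : ℕ) : Odious (Nat.bit b n) ↔ (b = true ↔ ¬ Odious n) := by
  unfold Odious
  rcases Nat.eq_zero_or_pos (Nat.bit b n) with h | h
  · rw [Nat.bit_eq_zero_iff] at h
    obtain ⟨rfl, rfl⟩ := h
    simp
  · rw [Nat.digits_def' (by norm_num) h]
    cases b
    · have h1 : Nat.bit false n % 2 = 0 := by simp [Nat.bit]
      have h2 : Nat.bit false n / 2 = n := by simp [Nat.bit]
      rw [h1, h2]
      simp
    · have h1 : Nat.bit true n % 2 = 1 := by simp only [Nat.bit, cond_true]; omega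
      have h2 : Nat.bit true n / 2 = n := by simp only [Nat.bit, cond_true]; omega
      rw [h1, h2]
      simp [Nat.odd_add_one]

theorem gx_odious (m : ℕ) : ∀ c, Odious (gx c m) ↔ c = true := by
  induction m using Nat.binaryRec with
  | zero => 
    intro c
    have h : gx c 0 = Nat.bit c 0 := by simp [gx]
    rw [h, odious_bit]
    simp [odious_zero]
  | bit d m ih =>
    intro c
    rw [gx_bit, odious_bit, ih]
    cases c <;> cases d <;> simp

theorem gx_surj (n : ℕ) : ∀ c, (Odious n ↔ c = true) → ∃ m, gx c m = n := by
  induction n using Nat.binaryRec with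
  | zero =>
    intro c h
    refine ⟨0, ?_⟩
    have : c = false := by simpa [odious_zero] using h
    subst this
    simp [gx]
  | bit b n ih =>
    intro c h
    rw [odious_bit] at h
    obtain ⟨m, hm⟩ := ih (b ^^ c) (by
      by_cases ho : Odious n <;> cases b <;> cases c <;> simp_all)
    refine ⟨Nat.bit (b ^^ c) m, ?_⟩
    rw [gx_bit, hm]
    simp

theorem gx_inj (m : ℕ) : ∀ c k, gx c m = gx c k → m = k := by
  have h0 : ∀ c k, gx c 0 = gx c k → 0 = k := by
    intro c k
    induction k using Nat.binaryRec generalizing c with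
    | zero => simp
    | bit e k ih =>
      intro h
      rw [show (0 : ℕ) = Nat.bit false 0 from rfl, gx_bit, gx_bit, bit_inj'] at h
      have he : e = false := by cases e <;> cases c <;> simp_all
      subst he
      have := ih false h.2
      subst this; rfl
  induction m using Nat.binaryRec with
  | zero => exact h0
  | bit d m ih =>
    intro c k h
    induction k using Nat.binaryRec with
    | zero => exact (h0 _ _ h.symm).symm
    | bit e k _ =>
      rw [gx_bit, gx_bit, bit_inj'] at h
      have he : d = e := by cases e <;> cases c <;> cases d <;> simp_all
      subst he
      rw [ih _ _ h.2]

theorem gx_gt (m : ℕ) : ∀ c, 1 ≤ m → m < gx c m := by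
  induction m using Nat.binaryRec with
  | zero => intro c h; omega
  | bit d m ih =>
    intro c h
    rcases Nat.eq_zero_or_pos m with rfl | hm
    · cases d
      · simp at h
      · cases c <;> decide
    · rw [gx_bit]
      have := ih d hm
      generalize gx d m = x at *
      cases d <;> cases c <;> simp only [Nat.bit, cond_true, cond_false, Bool.xor_true, Bool.xor_false, Bool.not_true, Bool.not_false] <;> omega

theorem nim_inj : Function.Injective nimDouble := by
  intro a b h
  rw [gx_zero, gx_zero] at h
  exact gx_inj _ _ _ h

theorem nim_not_odious (m : ℕ) : ¬ Odious (nimDouble m) := by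
  rw [gx_zero, gx_odious]; simp

theorem nim_reach (m : ℕ) : 1 ≤ m → ∃ i k, 1 ≤ i ∧ Odious i ∧ nimDouble^[k] i = m := by
  induction m using Nat.strong_induction_on with
  | _ m ih =>
    intro hm
    by_cases ho : Odious m
    · exact ⟨m, 0, hm, ho, rfl⟩
    · obtain ⟨p, hp⟩ := gx_surj m false (by simp [ho])
      have hp1 : 1 ≤ p := by
        rcases Nat.eq_zero_or_pos p with rfl | h
        · simp [gx] at hp; omega
        · exact h
      obtain ⟨i, k, hi, hio, hk⟩ := ih p (hp ▸ gx_gt p false hp1) hp1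
      refine ⟨i, k + 1, hi, hio, ?_⟩
      rw [Function.iterate_succ_apply', hk, gx_zero, hp]

theorem nim_iter_eq (a : ℕ) : ∀ (b i j : ℕ), Odious i → Odious j →
    nimDouble^[a] i = nimDouble^[b] j → i = j := by
  induction a with
  | zero =>
    intro b i j hi hj h
    cases b with
    | zero => exact h
    | succ b =>
      rw [Function.iterate_succ_apply'] at h
      exact absurd (h ▸ (show Odious (nimDouble^[0] i) from hi)) (nim_not_odious _)
  | succ a ih =>
    intro b i j hi hj h
    cases b with
    | zero =>
      rw [Function.iterate_succ_apply'] at h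
      exact absurd (h.symm ▸ (show Odious (nimDouble^[0] j) from hj)) (nim_not_odious _)
    | succ b =>
      rw [Function.iterate_succ_apply', Function.iterate_succ_apply'] at h
      exact ih b i j hi hj (nim_inj h)

theorem nim_iter_pos (k i : ℕ) (hi : 1 ≤ i) : 1 ≤ nimDouble^[k] i := by
  induction k with
  | zero => exact hi
  | succ k ih =>
    rw [Function.iterate_succ_apply', gx_zero]
    have := gx_gt _ false ih
    omega

theorem stmt_14 :
    (∀ i j : ℕ, 1 ≤ i → 1 ≤ j → Odious i → Odious j → i ≠ j →
      Disjoint (orbit i) (orbit j)) ∧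
    (⋃ i ∈ {i : ℕ | 1 ≤ i ∧ Odious i}, orbit i) = {n : ℕ | ∃ m ≥ 1, n = nimDouble m} := by
  constructor
  · intro i j _ _ hi hj hne
    rw [Set.disjoint_left]
    rintro x ⟨a, _, ha⟩ ⟨b, _, hb⟩
    exact hne (nim_iter_eq a b i j hi hj (ha.trans hb.symm))
  · ext n
    simp only [Set.mem_iUnion, Set.mem_setOf_eq, orbit]
    constructor
    · rintro ⟨i, ⟨hi, _⟩, m, hm, rfl⟩
      obtain ⟨k, rfl⟩ : ∃ k, m = k + 1 := ⟨m - 1, by omega⟩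
      exact ⟨nimDouble^[k] i, nim_iter_pos k i hi, Function.iterate_succ_apply' _ _ _⟩
    · rintro ⟨m, hm, rfl⟩
      obtain ⟨i, k, hi, hio, hk⟩ := nim_reach m hm
      refine ⟨i, ⟨hi, hio⟩, k + 1, by omega, ?_⟩
      rw [Function.iterate_succ_apply', hk]
end

section
/- Define α(m) = m XOR ⌊m/2⌋ and N(m) = m XOR (2m), and let e(k) denote the k-th evil number in increasing order (with e(0) = 0, e(1) = 3). Then for every m ∈ ℕ, e(α(m)) = N(m). -/
theorem evil_zero : Evil 0 := by simp [Evil]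

theorem evil_double (k : ℕ) : Evil (2 * k) ↔ Evil k := by
  rcases Nat.eq_zero_or_pos k with rfl | h
  · simp
  · unfold Evil
    rw [Nat.digits_def' (by norm_num) (by omega)]
    have h1 : 2 * k % 2 = 0 := by omega
    have h2 : 2 * k / 2 = k := by omega
    rw [h1, h2, List.count_cons]
    simp

theorem evil_double_add_one (k : ℕ) : Evil (2 * k + 1) ↔ ¬ Evil k := by
  unfold Evil
  rw [Nat.digits_def' (by norm_num) (by omega)]
  have h1 : (2 * k + 1) % 2 = 1 := by omega
  have h2 : (2 * k + 1) / 2 = k := by omega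
  rw [h1, h2, List.count_cons]
  simp [Nat.even_add_one]

theorem evil_xor (a : ℕ) : ∀ b, Evil (a ^^^ b) ↔ (Evil a ↔ Evil b) := by
  induction a using Nat.strong_induction_on with
  | _ a ih =>
    intro b
    rcases Nat.eq_zero_or_pos a with rfl | h
    · simp [evil_zero]
    · have hi := ih (a / 2) (by omega) (b / 2)
      have hd : (a ^^^ b) / 2 = a / 2 ^^^ b / 2 := Nat.xor_div_two
      have hm : (a ^^^ b) % 2 = (a + b) % 2 := Nat.xor_mod_two_eq
      rw [← hd] at hi
      have key : ∀ n, Evil n ↔ (n % 2 = 0 ↔ Evil (n / 2)) := by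
        intro n
        rcases Nat.mod_two_eq_zero_or_one n with h0 | h0
        · have : n = 2 * (n / 2) := by omega
          conv_lhs => rw [this, evil_double]
          simp [h0]
        · have : n = 2 * (n / 2) + 1 := by omega
          conv_lhs => rw [this, evil_double_add_one]
          simp [h0]
      rw [key (a ^^^ b), key a, key b, hi, hm]
      have : (a + b) % 2 = 0 ↔ (a % 2 = 0 ↔ b % 2 = 0) := by omega
      rw [this]
      generalize Evil (a / 2) = p, Evil (b / 2) = q, (a % 2 = 0) = r, (b % 2 = 0) = s
      by_cases p <;> by_cases q <;> by_cases r <;> by_cases s <;> simp [*]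

open Classical in
theorem count_evil_double (k : ℕ) : Nat.count Evil (2 * k) = k := by
  induction k with
  | zero => simp
  | succ k ih =>
    rw [show 2 * (k + 1) = 2 * k + 1 + 1 by ring, Nat.count_succ, Nat.count_succ, ih]
    simp only [evil_double, evil_double_add_one]
    by_cases h : Evil k <;> simp [h]

open Classical in
theorem count_evil (n : ℕ) (hn : Evil n) : Nat.count Evil n = n / 2 := by
  rcases Nat.even_or_odd' n with ⟨k, rfl | rfl⟩
  · rw [count_evil_double]; omega
  · rw [evil_double_add_one] at hn
    rw [Nat.count_succ, count_evil_double]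
    simp only [evil_double, hn, if_false]
    omega

theorem stmt_15 (m : ℕ) :
    Nat.nth Evil (m ^^^ (m / 2)) = m ^^^ (2 * m) := by
  classical
  have he : Evil (m ^^^ (2 * m)) := by
    rw [evil_xor, evil_double]
  have h := Nat.nth_count he
  rw [count_evil _ he, Nat.xor_div_two, show 2 * m / 2 = m by omega, Nat.xor_comm] at h
  exact h
end

section
/- Let p be a prime, let a, b, c ∈ {0,…,p−1} and x, y, z ∈ ℕ, and write T(x,y,z) = (x+y+z)!/(x!·y!·z!) for the trinomial coefficient. If a+b+c < p, then T(px+a, py+b, pz+c) ≡ C(a+b+c, a) · C(b+c, b) · T(x,y,z) (mod p). If a+b+c ≥ p, then T(px+a, py+b, pz+c) ≡ 0 (mod p). -/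
/-- The trinomial coefficient `T(x,y,z) = (x+y+z)! / (x!·y!·z!)` (exact natural division). -/
def trinomial (x y z : ℕ) : ℕ :=
  (x + y + z).factorial / (x.factorial * y.factorial * z.factorial)

theorem trinomial_eq_choose (x y z : ℕ) :
    trinomial x y z = Nat.choose (x + y + z) x * Nat.choose (y + z) y := by
  unfold trinomial
  apply Nat.div_eq_of_eq_mul_left (by positivity)
  have h1 := Nat.add_choose_mul_factorial_mul_factorial (y + z) x
  have h2 := Nat.add_choose_mul_factorial_mul_factorial z y
  rw [show x + y + z = y + z + x by ring, ← h1, Nat.add_comm y z, ← h2]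
  ring

theorem lucas_step (p n k r s : ℕ) (hp : p.Prime) (hr : r < p) (hs : s < p) :
    Nat.choose (p * n + r) (p * k + s) ≡ Nat.choose r s * Nat.choose n k [MOD p] := by
  have := Fact.mk hp
  have h := Choose.choose_modEq_choose_mod_mul_choose_div_nat
    (p := p) (n := p * n + r) (k := p * k + s)
  rwa [Nat.mul_add_mod, Nat.mul_add_mod, Nat.mod_eq_of_lt hr, Nat.mod_eq_of_lt hs,
    Nat.mul_add_div hp.pos, Nat.mul_add_div hp.pos, Nat.div_eq_of_lt hr, Nat.div_eq_of_lt hs,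
    Nat.add_zero, Nat.add_zero] at h

/-- A carry in the last digit makes the binomial coefficient vanish mod `p`. -/
theorem lucas_carry (p n k r s : ℕ) (hp : p.Prime) (hs : s < p) (h1 : p ≤ r) (h2 : r < p + s) :
    Nat.choose (p * n + r) (p * k + s) ≡ 0 [MOD p] := by
  have h := lucas_step p (n + 1) k (r - p) s hp (by omega) hs
  rw [Nat.choose_eq_zero_of_lt (show r - p < s by omega), Nat.zero_mul,
    show p * (n + 1) + (r - p) = p * n + r by rw [Nat.mul_add]; omega] at h
  exact h

theorem stmt_19 (p a b c x y z : ℕ) (hp : p.Prime)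
    (ha : a < p) (hb : b < p) (hc : c < p) :
    (a + b + c < p →
      trinomial (p * x + a) (p * y + b) (p * z + c) ≡
        Nat.choose (a + b + c) a * Nat.choose (b + c) b * trinomial x y z [MOD p]) ∧
    (p ≤ a + b + c →
      trinomial (p * x + a) (p * y + b) (p * z + c) ≡ 0 [MOD p]) := by
  rw [trinomial_eq_choose, trinomial_eq_choose,
    show p * x + a + (p * y + b) + (p * z + c) = p * (x + y + z) + (a + b + c) by ring,
    show p * y + b + (p * z + c) = p * (y + z) + (b + c) by ring]
  constructor
  · intro h
    have h1 := lucas_step p (x + y + z) x (a + b + c) a hp h ha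
    have h2 := lucas_step p (y + z) y (b + c) b hp (by omega) hb
    have h3 := h1.mul h2
    rwa [Nat.mul_mul_mul_comm ((a + b + c).choose a)] at h3
  · intro h
    by_cases hbc : p ≤ b + c
    · simpa using (lucas_carry p (y + z) y (b + c) b hp hb hbc (by omega)).mul_left
        ((p * (x + y + z) + (a + b + c)).choose (p * x + a))
    · simpa using (lucas_carry p (x + y + z) x (a + b + c) a hp ha h (by omega)).mul_right
        ((p * (y + z) + (b + c)).choose (p * y + b))
end
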